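/- arXiv:1911.05555 — 2 statements merged into one kernel-verified Lean document; each statement's English description precedes it below -/
import Mathlib

section
/- Fix K ∈ T^d, a point p_1 ∈ T^d, a number z_1 ∈ ℂ \ [m_K, M_K], and n' ∈ ℕ, and for n ∈ ℕ set V_n(p_1) = {p ∈ T^d : 1/(n + n' + 1) < |p − p_1| < 1/(n + n')}. Then there exists an orthonormal system {c_n} in L²(T^d) such that supp c_n ⊆ V_n(p_1) for every n and, for all n ≠ m, ∫_{V_n(p_1)} ∫_{V_m(p_1)} v_1(p) v_1(q) c_n(p) c_m(q) / (w_2(K; p, q) − z_1)² dp dq = 0. -/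
open MeasureTheory Complex Filter Topology Set

noncomputable section

instance fact2pi : Fact (0 < 2 * Real.pi) := ⟨by positivity⟩

/-- The d-dimensional torus `(-π, π]^d` with its Haar (Lebesgue) measure. -/
abbrev Td (d : ℕ) : Type := Fin d → AddCircle (2 * Real.pi)

/-- The Hilbert space `L²(T^d)`. -/
abbrev L2 (d : ℕ) := Lp ℂ 2 (volume : Measure (Td d))

/-- The Hilbert space `L²((T^d)²)`. -/
abbrev L2two (d : ℕ) := Lp ℂ 2 (volume : Measure (Td d × Td d))

variable {d : ℕ}

/-- `E_min(K,k) = min_q w₂(K; k, q)`. -/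
def Emin (w₂ : Td d → Td d → Td d → ℝ) (K k : Td d) : ℝ := ⨅ q, w₂ K k q

/-- `E_max(K,k) = max_q w₂(K; k, q)`. -/
def Emax (w₂ : Td d → Td d → Td d → ℝ) (K k : Td d) : ℝ := ⨆ q, w₂ K k q

/-- `m_K = min_{p,q} w₂(K; p, q)`. -/
def mK (w₂ : Td d → Td d → Td d → ℝ) (K : Td d) : ℝ := ⨅ x : Td d × Td d, w₂ K x.1 x.2

/-- `M_K = max_{p,q} w₂(K; p, q)`. -/
def MK (w₂ : Td d → Td d → Td d → ℝ) (K : Td d) : ℝ := ⨆ x : Td d × Td d, w₂ K x.1 x.2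

/-- The Fredholm determinant
`Δ_K(k; z) = w₁(K,k) − z − (1/2) ∫ v₁(t)² / (w₂(K;k,t) − z) dt`. -/
def Delta (v₁ : Td d → ℝ) (w₁ : Td d → Td d → ℝ) (w₂ : Td d → Td d → Td d → ℝ)
    (K k : Td d) (z : ℂ) : ℂ :=
  (w₁ K k : ℂ) - z - (1 / 2) * ∫ t, (v₁ t : ℂ) ^ 2 / ((w₂ K k t : ℂ) - z)

/-- The interval `[E_min(K,k), E_max(K,k)]`, viewed inside `ℂ`. -/
def bandKk (w₂ : Td d → Td d → Td d → ℝ) (K k : Td d) : Set ℂ :=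
  Complex.ofReal '' Set.Icc (Emin w₂ K k) (Emax w₂ K k)

/-- The interval `[m_K, M_K]`, viewed inside `ℂ`. -/
def bigBand (w₂ : Td d → Td d → Td d → ℝ) (K : Td d) : Set ℂ :=
  Complex.ofReal '' Set.Icc (mK w₂ K) (MK w₂ K)

/-- The two-particle branch
`Λ_K = {z : ∃ k, z ∉ [E_min(K,k), E_max(K,k)] ∧ Δ_K(k; z) = 0}`. -/
def LamK (v₁ : Td d → ℝ) (w₁ : Td d → Td d → ℝ) (w₂ : Td d → Td d → Td d → ℝ)
    (K : Td d) : Set ℂ :=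
  {z | ∃ k, z ∉ bandKk w₂ K k ∧ Delta v₁ w₁ w₂ K k z = 0}

/-- `Σ_K = [m_K, M_K] ∪ Λ_K`. -/
def SigK (v₁ : Td d → ℝ) (w₁ : Td d → Td d → ℝ) (w₂ : Td d → Td d → Td d → ℝ)
    (K : Td d) : Set ℂ :=
  bigBand w₂ K ∪ LamK v₁ w₁ w₂ K

/-!
The integral in question is a bilinear form `B` on `L²`, evaluated at `cₙ` and `cₘ`. The functions
supported in an infinite open set form an infinite-dimensional subspace of `L²`, and on any such
subspace finitely many linear conditions have a common unit solution. So the `cₙ` can be chosen one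
after the other, each orthogonal to all its predecessors and annihilated by `B` against them on
either side.
-/

open scoped Function ENNReal

section FiniteRankConstraints

variable {𝕜 H : Type*} [RCLike 𝕜]

lemma exists_norm_eq_one_of_not_finiteDimensional [NormedAddCommGroup H] [NormedSpace 𝕜 H]
    {F : Type*} [AddCommGroup F] [Module 𝕜 F] [FiniteDimensional 𝕜 F] {E : Submodule 𝕜 H}
    (hE : ¬ FiniteDimensional 𝕜 E) (φ : H →ₗ[𝕜] F) : ∃ x ∈ E, ‖x‖ = 1 ∧ φ x = 0 := by
  have hker : (φ.domRestrict E).ker ≠ ⊥ := fun h =>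
    hE (FiniteDimensional.of_injective (φ.domRestrict E) (LinearMap.ker_eq_bot.1 h))
  obtain ⟨⟨x, hxE⟩, hφx, hx⟩ := Submodule.exists_mem_ne_zero_of_ne_bot hker
  have hx : x ≠ 0 := fun h => hx (Subtype.ext h)
  have hφx : φ x = 0 := hφx
  exact ⟨(‖x‖⁻¹ : 𝕜) • x, E.smul_mem _ hxE, norm_smul_inv_norm hx, by rw [map_smul, hφx, smul_zero]⟩

lemma exists_seq_pairwise_of_forall_finset_exists {α : Type*} {P : ℕ → α → Prop}
    {r : α → α → Prop} [Std.Symm r] (h : ∀ n (s : Finset α), ∃ y, P n y ∧ ∀ x ∈ s, r x y) :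
    ∃ f : ℕ → α, (∀ n, P n (f n)) ∧ Pairwise (r on f) := by
  classical
  choose next hP hr using h
  let chosen : ℕ → Finset α := fun n => Nat.rec ∅ (fun k s => insert (next k s) s) n
  have hmono : Monotone chosen := monotone_nat_of_le_succ fun n => Finset.subset_insert _ _
  have hmem {m n : ℕ} (hmn : m < n) : next m (chosen m) ∈ chosen n :=
    hmono (Nat.succ_le_of_lt hmn) (Finset.mem_insert_self _ _)
  refine ⟨fun n => next n (chosen n), fun n => hP n _, fun m n hmn => ?_⟩
  rcases hmn.lt_or_gt with hlt | hgt
  · exact hr n _ _ (hmem hlt)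
  · exact symm (hr m _ _ (hmem hgt))

lemma exists_orthonormal_isOrthoᵢ [NormedAddCommGroup H] [InnerProductSpace 𝕜 H]
    {E : ℕ → Submodule 𝕜 H} (hE : ∀ n, ¬ FiniteDimensional 𝕜 (E n)) (B : H →ₗ[𝕜] H →ₗ[𝕜] 𝕜) :
    ∃ c : ℕ → H, Orthonormal 𝕜 c ∧ (∀ n, c n ∈ E n) ∧ B.IsOrthoᵢ c := by
  let r : H → H → Prop := fun y x => inner 𝕜 y x = 0 ∧ B y x = 0 ∧ B x y = 0
  have : Std.Symm r := ⟨fun _ _ h => ⟨inner_eq_zero_symm.1 h.1, h.2.2, h.2.1⟩⟩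
  have hstep (n : ℕ) (S : Finset H) : ∃ x, (x ∈ E n ∧ ‖x‖ = 1) ∧ ∀ y ∈ S, r y x := by
    let φ : H →ₗ[𝕜] S → 𝕜 × 𝕜 × 𝕜 :=
      LinearMap.pi fun y => (innerₛₗ 𝕜 (y : H)).prod ((B y).prod (B.flip y))
    obtain ⟨x, hxE, hx, hφx⟩ := exists_norm_eq_one_of_not_finiteDimensional (hE n) φ
    refine ⟨x, ⟨hxE, hx⟩, fun y hy => ?_⟩
    obtain ⟨hinner, hB⟩ := Prod.mk_eq_zero.1 (congrFun hφx ⟨y, hy⟩)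
    exact ⟨hinner, Prod.mk_eq_zero.1 hB⟩
  obtain ⟨c, hc, hr⟩ := exists_seq_pairwise_of_forall_finset_exists hstep
  exact ⟨c, ⟨fun n => (hc n).2, fun _ _ h => (hr h).1⟩, fun n => (hc n).1, fun _ _ h => (hr h).2.1⟩

end FiniteRankConstraints

section SupportedLp

variable {X : Type*} [MeasurableSpace X] {μ : Measure X} {V : Set X}

/-- The subspace of `Lᵖ(μ)` of functions supported in `V`, for a measurable set `V`: those that
restrict to `0` on `Vᶜ`. -/
def supportedLp (𝕜 : Type*) [RCLike 𝕜] (p : ℝ≥0∞) [Fact (1 ≤ p)] (μ : Measure X) (V : Set X) :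
    Submodule 𝕜 (Lp 𝕜 p μ) :=
  (LpToLpRestrictCLM X 𝕜 𝕜 μ p Vᶜ).ker

variable {𝕜 : Type*} [RCLike 𝕜]

lemma mem_supportedLp_iff {p : ℝ≥0∞} [Fact (1 ≤ p)] (hV : MeasurableSet V) {f : Lp 𝕜 p μ} :
    f ∈ supportedLp 𝕜 p μ V ↔ ∀ᵐ x ∂μ, x ∉ V → f x = 0 := by
  have hres := LpToLpRestrictCLM_coeFn 𝕜 Vᶜ f
  change LpToLpRestrictCLM X 𝕜 𝕜 μ p Vᶜ f = 0 ↔ _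
  rw [Lp.eq_zero_iff_ae_eq_zero]
  exact ⟨fun h => (ae_restrict_iff' hV.compl).1 (hres.symm.trans h),
    fun h => hres.trans ((ae_restrict_iff' hV.compl).2 h)⟩

lemma not_finiteDimensional_supportedLp_of_disjoint [SigmaFinite μ] (hV : MeasurableSet V)
    {A : ℕ → Set X} (hAm : ∀ j, MeasurableSet (A j)) (hAV : ∀ j, A j ⊆ V)
    (hA : ∀ j, μ (A j) ≠ 0) (hdisj : Pairwise (Disjoint on A)) :
    ¬ FiniteDimensional 𝕜 (supportedLp 𝕜 2 μ V) := by
  choose S hSm hSA hSpos hStop using fun j =>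
    Measure.exists_subset_measure_lt_top (hAm j) (pos_iff_ne_zero.2 (hA j))
  let e (j : ℕ) : Lp 𝕜 2 μ := indicatorConstLp 2 (hSm j) (hStop j).ne 1
  have inner_e (i j : ℕ) : inner 𝕜 (e i) (e j) = μ.real (S i ∩ S j) :=
    L2.inner_indicatorConstLp_one_indicatorConstLp_one (hSm i) (hSm j) (hStop i).ne (hStop j).ne
  have he (j : ℕ) : e j ≠ 0 := fun h => by
    have hself := inner_e j j
    rw [h, inner_zero_left, Set.inter_self, eq_comm, RCLike.ofReal_eq_zero] at hself
    exact (ENNReal.toReal_pos (hSpos j).ne' (hStop j).ne).ne' hself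
  have horth (i j : ℕ) (hij : i ≠ j) : inner 𝕜 (e i) (e j) = 0 := by
    rw [inner_e, ((hdisj hij).mono (hSA i) (hSA j)).inter_eq, measureReal_empty, RCLike.ofReal_zero]
  have hmem (j : ℕ) : e j ∈ supportedLp 𝕜 2 μ V := by
    rw [mem_supportedLp_iff hV]
    filter_upwards [indicatorConstLp_coeFn (p := 2) (hs := hSm j) (hμs := (hStop j).ne)
      (c := (1 : 𝕜))] with x hx hxV
    exact hx.trans (indicator_of_notMem (fun h => hxV (hAV j (hSA j h))) _)
  have hli : LinearIndependent 𝕜 e := linearIndependent_of_ne_zero_of_inner_eq_zero he horth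
  have hliV : LinearIndependent 𝕜 fun j => (⟨e j, hmem j⟩ : supportedLp 𝕜 2 μ V) :=
    .of_comp (supportedLp 𝕜 2 μ V).subtype hli
  exact fun _ => not_finite_iff_infinite.2 inferInstance hliV.finite

lemma not_finiteDimensional_supportedLp [TopologicalSpace X] [T2Space X] [OpensMeasurableSpace X]
    [SigmaFinite μ] [μ.IsOpenPosMeasure] (hV : IsOpen V) (hVinf : V.Infinite) :
    ¬ FiniteDimensional 𝕜 (supportedLp 𝕜 2 μ V) := by
  have := hVinf.to_subtype
  obtain ⟨U, hUinf, hU, hdisj⟩ := exists_seq_infinite_isOpen_pairwise_disjoint V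
  have hUo (j : ℕ) : IsOpen ((↑) '' U j : Set X) := hV.isOpenMap_subtype_val _ (hU j)
  exact not_finiteDimensional_supportedLp_of_disjoint hV.measurableSet
    (fun j => (hUo j).measurableSet) (fun j => Subtype.coe_image_subset V (U j))
    (fun j => (hUo j).measure_ne_zero μ ((hUinf j).nonempty.image _))
    fun _ _ hij => disjoint_image_of_injective Subtype.val_injective (hdisj hij)

end SupportedLp

section HilbertSchmidtForm

variable {𝕜 X Y : Type*} [RCLike 𝕜] [MeasurableSpace X] [MeasurableSpace Y] {μ : Measure X}
  {ν : Measure Y} {k : X × Y → 𝕜}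

lemma memLp_two_mul_prod {f : X → 𝕜} {g : Y → 𝕜} (hf : MemLp f 2 μ) (hg : MemLp g 2 ν) :
    MemLp (fun z : X × Y => f z.1 * g z.2) 2 (μ.prod ν) := by
  refine (memLp_two_iff_integrable_sq_norm (hf.1.comp_fst.mul hg.1.comp_snd)).2 ?_
  simpa only [Pi.mul_apply, norm_mul, mul_pow] using
    hf.norm.integrable_sq.mul_prod hg.norm.integrable_sq

lemma integrable_kernel_mul_prod (hk : MemLp k 2 (μ.prod ν)) (f : Lp 𝕜 2 μ) (g : Lp 𝕜 2 ν) :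
    Integrable (fun z => k z * (f z.1 * g z.2)) (μ.prod ν) :=
  hk.integrable_mul (memLp_two_mul_prod (Lp.memLp f) (Lp.memLp g))

/-- The bilinear form `(f, g) ↦ ∫∫ k(p, q) f(p) g(q)` on `L²(μ) × L²(ν)` with a Hilbert–Schmidt
kernel `k ∈ L²(μ ⊗ ν)`; no argument is conjugated. -/
def hilbertSchmidtForm (hk : MemLp k 2 (μ.prod ν)) : Lp 𝕜 2 μ →ₗ[𝕜] Lp 𝕜 2 ν →ₗ[𝕜] 𝕜 :=
  LinearMap.mk₂ 𝕜 (fun f g => ∫ z, k z * (f z.1 * g z.2) ∂μ.prod ν)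
    (fun f f' g => by
      rw [← integral_add (integrable_kernel_mul_prod hk f g) (integrable_kernel_mul_prod hk f' g)]
      refine integral_congr_ae ?_
      filter_upwards [Measure.quasiMeasurePreserving_fst.ae (Lp.coeFn_add f f')] with z hz
      rw [hz, Pi.add_apply, add_mul, mul_add])
    (fun a f g => by
      rw [← integral_smul]
      refine integral_congr_ae ?_
      filter_upwards [Measure.quasiMeasurePreserving_fst.ae (Lp.coeFn_smul a f)] with z hz
      rw [hz, Pi.smul_apply, smul_mul_assoc, mul_smul_comm])
    (fun f g g' => by
      rw [← integral_add (integrable_kernel_mul_prod hk f g) (integrable_kernel_mul_prod hk f g')]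
      refine integral_congr_ae ?_
      filter_upwards [Measure.quasiMeasurePreserving_snd.ae (Lp.coeFn_add g g')] with z hz
      rw [hz, Pi.add_apply, mul_add, mul_add])
    (fun a f g => by
      rw [← integral_smul]
      refine integral_congr_ae ?_
      filter_upwards [Measure.quasiMeasurePreserving_snd.ae (Lp.coeFn_smul a g)] with z hz
      rw [hz, Pi.smul_apply, mul_smul_comm, mul_smul_comm])

lemma hilbertSchmidtForm_eq_setIntegral [SFinite μ] [SFinite ν] (hk : MemLp k 2 (μ.prod ν))
    {f : Lp 𝕜 2 μ} {g : Lp 𝕜 2 ν} {V : Set X} {W : Set Y}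
    (hf : ∀ᵐ p ∂μ, p ∉ V → f p = 0) (hg : ∀ᵐ q ∂ν, q ∉ W → g q = 0) :
    hilbertSchmidtForm hk f g = ∫ p in V, ∫ q in W, k (p, q) * (f p * g q) ∂ν ∂μ := by
  rw [← setIntegral_prod _ (integrable_kernel_mul_prod hk f g).integrableOn]
  refine (setIntegral_eq_integral_of_ae_compl_eq_zero ?_).symm
  filter_upwards [Measure.quasiMeasurePreserving_fst.ae hf,
    Measure.quasiMeasurePreserving_snd.ae hg] with z hfz hgz hz
  rcases not_and_or.1 hz with hV | hW
  · rw [hfz hV, zero_mul, mul_zero]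
  · rw [hgz hW, mul_zero, mul_zero]

end HilbertSchmidtForm

lemma infinite_annulus {X : Type*} [PseudoMetricSpace X] [PreconnectedSpace X] {x y : X} {r R : ℝ}
    (hr : 0 ≤ r) (hrR : r < R) (hy : R ≤ dist y x) :
    {p | r < dist p x ∧ dist p x < R}.Infinite := by
  have hsub : Ioo r R ⊆ (dist · x) '' {p | r < dist p x ∧ dist p x < R} := fun t ht => by
    obtain ⟨p, rfl⟩ := intermediate_value_univ x y (continuous_id.dist continuous_const)
      ⟨(dist_self x).trans_le (hr.trans ht.1.le), ht.2.le.trans hy⟩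
    exact ⟨p, ht, rfl⟩
  exact ((Ioo_infinite hrR).mono hsub).of_image _

lemma isOpen_annulus {X : Type*} [PseudoMetricSpace X] (x : X) (r R : ℝ) :
    IsOpen {p | r < dist p x ∧ dist p x < R} :=
  isOpen_Ioo.preimage (continuous_id.dist continuous_const)

lemma exists_dist_eq_pi [Nonempty (Fin d)] (x : Td d) : ∃ y, dist y x = Real.pi := by
  refine ⟨x + fun _ => ((2 * Real.pi / 2 : ℝ) : AddCircle (2 * Real.pi)), ?_⟩
  rw [dist_eq_norm, add_sub_cancel_left, pi_norm_const, AddCircle.norm_half_period_eq,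
    abs_of_pos Real.two_pi_pos, mul_div_cancel_left₀ _ two_ne_zero]

lemma ofReal_sub_ne_zero_of_notMem_bigBand {w₂ : Td d → Td d → Td d → ℝ} {K : Td d} {z : ℂ}
    (hw₂ : Continuous fun x : Td d × Td d => w₂ K x.1 x.2) (hz : z ∉ bigBand w₂ K) (p q : Td d) :
    (w₂ K p q : ℂ) - z ≠ 0 := fun h =>
  have hrange := isCompact_range hw₂
  hz ⟨w₂ K p q, ⟨ciInf_le hrange.bddBelow (p, q), le_ciSup hrange.bddAbove (p, q)⟩,
    sub_eq_zero.1 h⟩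

lemma infinite_torus_annulus (hd : 1 ≤ d) {n' : ℕ} (hn' : 1 ≤ n') (p₁ : Td d) (n : ℕ) :
    {p | 1 / (n + n' + 1 : ℝ) < dist p p₁ ∧ dist p p₁ < 1 / (n + n' : ℝ)}.Infinite := by
  have : Nonempty (Fin d) := Fin.pos_iff_nonempty.1 hd
  obtain ⟨y, hy⟩ := exists_dist_eq_pi p₁
  have hge : (1 : ℝ) ≤ n + n' := by exact_mod_cast hn'.trans (Nat.le_add_left n' n)
  have hpos : (0 : ℝ) < n + n' := one_pos.trans_le hge
  refine infinite_annulus (y := y) (by positivity) (one_div_lt_one_div_of_lt hpos (lt_add_one _)) ?_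
  calc 1 / (n + n' : ℝ) ≤ 1 := (div_le_one hpos).2 hge
    _ ≤ Real.pi := by linarith [Real.pi_gt_three]
    _ = dist y p₁ := hy.symm

lemma memLp_resolvent_sq_kernel {v₁ : Td d → ℝ} {w₂ : Td d → Td d → Td d → ℝ} {K : Td d} {z : ℂ}
    (hv₁ : Continuous v₁) (hw₂ : Continuous fun x : Td d × Td d => w₂ K x.1 x.2)
    (hz : z ∉ bigBand w₂ K) (p : ℝ≥0∞) :
    MemLp (fun x : Td d × Td d => (v₁ x.1 : ℂ) * v₁ x.2 / ((w₂ K x.1 x.2 : ℂ) - z) ^ 2) p := by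
  have hcont : Continuous fun x : Td d × Td d =>
      (v₁ x.1 : ℂ) * v₁ x.2 / ((w₂ K x.1 x.2 : ℂ) - z) ^ 2 :=
    .div (by fun_prop) (by fun_prop) fun x =>
      pow_ne_zero 2 (ofReal_sub_ne_zero_of_notMem_bigBand hw₂ hz x.1 x.2)
  exact hcont.memLp_of_hasCompactSupport (.of_compactSpace _)

theorem exists_orthonormal_system_general {𝕜 X : Type*} [RCLike 𝕜] [TopologicalSpace X] [T2Space X]
    [MeasurableSpace X] [OpensMeasurableSpace X] {μ : Measure X} [SigmaFinite μ]
    [μ.IsOpenPosMeasure] {k : X × X → 𝕜} (hk : MemLp k 2 (μ.prod μ)) {V : ℕ → Set X}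
    (hV : ∀ n, IsOpen (V n)) (hVinf : ∀ n, (V n).Infinite) :
    ∃ c : ℕ → Lp 𝕜 2 μ, Orthonormal 𝕜 c ∧ (∀ n, ∀ᵐ p ∂μ, p ∉ V n → c n p = 0) ∧
      ∀ n m, n ≠ m → ∫ p in V n, ∫ q in V m, k (p, q) * (c n p * c m q) ∂μ ∂μ = 0 := by
  obtain ⟨c, hc, hcV, hck⟩ := exists_orthonormal_isOrthoᵢ
    (fun n => not_finiteDimensional_supportedLp (hV n) (hVinf n)) (hilbertSchmidtForm hk)
  have hsupp (n : ℕ) := (mem_supportedLp_iff (hV n).measurableSet).1 (hcV n)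
  exact ⟨c, hc, hsupp, fun n m hnm =>
    (hilbertSchmidtForm_eq_setIntegral hk (hsupp n) (hsupp m)).symm.trans (hck hnm)⟩

/-- Existence of an orthonormal system `{cₙ}` in `L²(T^d)`, with `cₙ`
supported in the annulus `V_n(p₁) = {p : 1/(n+n'+1) < |p − p₁| < 1/(n+n')}`, such that the
double integrals `∫∫ v₁(p)v₁(q)cₙ(p)cₘ(q)/(w₂(K;p,q) − z₁)² dp dq` vanish for `n ≠ m`. -/
theorem exists_orthonormal_system
    (d : ℕ) (hd : 1 ≤ d)
    (v₁ : Td d → ℝ) (w₂ : Td d → Td d → Td d → ℝ)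
    (hv₁ : Continuous v₁)
    (hw₂ : Continuous fun x : Td d × Td d × Td d => w₂ x.1 x.2.1 x.2.2)
    (hsym : ∀ K p q : Td d, w₂ K p q = w₂ K q p)
    (K p₁ : Td d) (z₁ : ℂ) (hz₁ : z₁ ∉ bigBand w₂ K) (n' : ℕ) (hn' : 1 ≤ n') :
    ∃ c : ℕ → L2 d, Orthonormal ℂ c ∧
      (∀ n : ℕ, ∀ᵐ p ∂(volume : Measure (Td d)),
        p ∉ {p : Td d | 1 / (n + n' + 1 : ℝ) < dist p p₁ ∧ dist p p₁ < 1 / (n + n' : ℝ)} →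
          c n p = 0) ∧
      ∀ n m : ℕ, n ≠ m →
        (∫ p in {p : Td d | 1 / (n + n' + 1 : ℝ) < dist p p₁ ∧ dist p p₁ < 1 / (n + n' : ℝ)},
          ∫ q in {q : Td d | 1 / (m + n' + 1 : ℝ) < dist q p₁ ∧ dist q p₁ < 1 / (m + n' : ℝ)},
            (v₁ p : ℂ) * (v₁ q : ℂ) * c n p * c m q / ((w₂ K p q : ℂ) - z₁) ^ 2) = 0 := by
  simpa only [div_mul_eq_mul_div, ← mul_assoc] using exists_orthonormal_system_general
    (memLp_resolvent_sq_kernel hv₁ (hw₂.comp (.prodMk_right K)) hz₁ 2)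
    (fun n => isOpen_annulus p₁ _ _) (infinite_torus_annulus hd hn' p₁)
end
end

section
/- For every K ∈ T^d, the two-particle branch Λ_K is contained in the essential spectrum of H(K): Λ_K ⊆ σ_ess(H(K)). -/
open MeasureTheory Complex Filter Topology Set

noncomputable section

/-- The swap map on `L²((T^d)²)`, `(S f)(p,q) = f(q,p)`. -/
def swapL (d : ℕ) : L2two d →ₗ[ℂ] L2two d :=
  Lp.compMeasurePreservingₗ ℂ Prod.swap MeasureTheory.Measure.measurePreserving_swap

/-- The subspace `L²_sym((T^d)²)` of symmetric functions, as the fixed-point space of swap. -/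
def symSub (d : ℕ) : Submodule ℂ (L2two d) := LinearMap.ker (swapL d - LinearMap.id)

abbrev L2sym (d : ℕ) := ↥(symSub d)

instance (d : ℕ) : CompleteSpace (L2sym d) := by
  have hiso : Isometry (swapL d) :=
    Lp.isometry_compMeasurePreserving MeasureTheory.Measure.measurePreserving_swap
  have hcl : IsClosed ((symSub d : Set (L2two d))) := by
    have h1 : (symSub d : Set (L2two d)) = {f | swapL d f = f} := by
      ext f
      simp [symSub, LinearMap.mem_ker, sub_eq_zero, LinearMap.sub_apply]
    rw [h1]
    exact isClosed_eq hiso.continuous continuous_id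
  exact hcl.completeSpace_coe

/-- The Hilbert space `H = ℂ ⊕ L²(T^d) ⊕ L²_sym((T^d)²)`. -/
abbrev H3 (d : ℕ) := WithLp 2 (ℂ × WithLp 2 (L2 d × L2sym d))

/-- The zero-particle component. -/
def p0 {d : ℕ} (f : H3 d) : ℂ := (WithLp.equiv 2 _ f).1

/-- The one-particle component. -/
def p1 {d : ℕ} (f : H3 d) : L2 d := (WithLp.equiv 2 _ ((WithLp.equiv 2 _ f).2)).1

/-- The two-particle component, as an element of `L²((T^d)²)`. -/
def p2 {d : ℕ} (f : H3 d) : L2two d :=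
  ((WithLp.equiv 2 _ ((WithLp.equiv 2 _ f).2)).2 : L2sym d)

/-- The essential spectrum of a bounded operator on a Hilbert space, via the Weyl criterion:
`λ ∈ σ_ess(A)` iff there is an orthonormal (singular) sequence `u` with `‖(A - λ)uₙ‖ → 0`. -/
def essSpec {H' : Type*} [NormedAddCommGroup H'] [InnerProductSpace ℂ H']
    (A : H' →L[ℂ] H') : Set ℂ :=
  {l | ∃ u : ℕ → H', Orthonormal ℂ u ∧
        Tendsto (fun n => ‖A (u n) - l • u n‖) atTop (𝓝 0)}

variable {d : ℕ}

/-- The defining equations of the `3×3` operator matrix `H(K)` acting on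
`ℂ ⊕ L²(T^d) ⊕ L²_sym((T^d)²)`:
`(H f)₀ = w₀(K) f₀ + ∫ v₀(t) f₁(t) dt`,
`(H f)₁(p) = v₀(p) f₀ + w₁(K; p) f₁(p) + ∫ v₁(t) f₂(p,t) dt`,
`(H f)₂(p,q) = (1/2)(v₁(p) f₁(q) + v₁(q) f₁(p)) + w₂(K; p,q) f₂(p,q)`. -/
def IsHamiltonian {d : ℕ} (w₀ v₀ v₁ : Td d → ℝ) (w₁ : Td d → Td d → ℝ)
    (w₂ : Td d → Td d → Td d → ℝ) (K : Td d) (H : H3 d →L[ℂ] H3 d) : Prop :=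
  ∀ f : H3 d,
    (p0 (H f) = (w₀ K : ℂ) * p0 f + (∫ t, (v₀ t : ℂ) * (p1 f) t)) ∧
    (⇑(p1 (H f)) =ᵐ[volume] fun p =>
        (v₀ p : ℂ) * p0 f + (w₁ K p : ℂ) * (p1 f) p +
          (∫ t, (v₁ t : ℂ) * (p2 f) (p, t))) ∧
    (⇑(p2 (H f)) =ᵐ[volume] fun x : Td d × Td d =>
        ((v₁ x.1 : ℂ) * (p1 f) x.2 + (v₁ x.2 : ℂ) * (p1 f) x.1) / 2 +
          (w₂ K x.1 x.2 : ℂ) * (p2 f) x)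

/-! A Schur complement argument produces Weyl sequences. Let `z ∉ [E_min(K, k), E_max(K, k)]` with
`Δ_K(k; z) = 0`, and consider vectors `(0, f₁, f₂)` with `f₁` vanishing outside a small open
neighbourhood `U` of `k`. Since `w₂(K; p, q) - z` is bounded away from zero when `p` or `q` lies in
`U`, the third row of `(H - z) f = 0` can be solved for `f₂`. The second row of `(H - z) f` is then
`Δ_K(p; z) f₁(p)`, which is small because `Δ_K(·; z)` is continuous at `k`, minus
`(v₁(p) / 2) ∫ v₁(t) f₁(t) / (w₂(K; p, t) - z) dt`. This integral and the first row are bounded by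
multiples of `‖v_i‖_{L²(U)} ‖f₁‖`, and `‖v_i‖_{L²(U)} → 0` as `U` shrinks to the null set `{k}`. So
for every `ε > 0` there is an infinite-dimensional space of vectors with `‖(H - z) f‖ ≤ ε ‖f‖`,
which contains unit vectors orthogonal to any given finite set. -/

section WeylCriterion

lemma exists_mem_norm_eq_one_forall_inner_eq_zero {𝕜 E : Type*} [RCLike 𝕜]
    [NormedAddCommGroup E] [InnerProductSpace 𝕜 E] {W : Submodule 𝕜 E}
    (hW : ¬ FiniteDimensional 𝕜 W) (s : Finset E) :
    ∃ u ∈ W, ‖u‖ = 1 ∧ ∀ x ∈ s, inner 𝕜 x u = 0 := by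
  let L : W →ₗ[𝕜] (s → 𝕜) := LinearMap.pi fun x => innerₛₗ 𝕜 (x : E) ∘ₗ W.subtype
  obtain ⟨w, hLw, hw⟩ : ∃ w : W, L w = 0 ∧ w ≠ 0 := by
    by_contra! h
    exact hW (.of_injective L ((injective_iff_map_eq_zero L).2 h))
  refine ⟨((‖(w : E)‖ : 𝕜)⁻¹) • (w : E), W.smul_mem _ w.2,
    norm_smul_inv_norm (by simpa using hw), fun x hx => ?_⟩
  have hxw : inner 𝕜 x (w : E) = 0 := congrFun hLw ⟨x, hx⟩
  rw [inner_smul_right, hxw, mul_zero]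

lemma mem_essSpec_of_forall_exists_submodule {E : Type*} [NormedAddCommGroup E]
    [InnerProductSpace ℂ E] {A : E →L[ℂ] E} {l : ℂ}
    (h : ∀ ε > 0, ∃ W : Submodule ℂ E, ¬ FiniteDimensional ℂ W ∧
      ∀ u ∈ W, ‖A u - l • u‖ ≤ ε * ‖u‖) : l ∈ essSpec A := by
  -- Each new vector is paired with a natural number controlling its error, so that the
  -- finite sets of earlier pairs also record how small the next error has to be.
  obtain ⟨f, hf, hlt⟩ := exists_seq_of_forall_finset_exists
    (fun x : ℕ × E => ‖x.2‖ = 1 ∧ ‖A x.2 - l • x.2‖ ≤ 1 / ((x.1 : ℝ) + 1))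
    (fun x y => x.1 < y.1 ∧ inner ℂ x.2 y.2 = 0) fun s _ => by
      classical
      obtain ⟨W, hW, hWA⟩ := h (1 / ((s.sup Prod.fst + 1 : ℕ) + 1)) (by positivity)
      obtain ⟨u, huW, hu, hsu⟩ := exists_mem_norm_eq_one_forall_inner_eq_zero hW (s.image Prod.snd)
      refine ⟨(s.sup Prod.fst + 1, u), ⟨hu, by simpa [hu] using hWA u huW⟩, fun x hx => ⟨?_, ?_⟩⟩
      · exact Nat.lt_succ_of_le (Finset.le_sup (f := Prod.fst) hx)
      · exact hsu _ (Finset.mem_image_of_mem _ hx)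
  have hmono : StrictMono fun n => (f n).1 := fun m n hmn => (hlt m n hmn).1
  refine ⟨fun n => (f n).2, ⟨fun n => (hf n).1, fun m n hmn => ?_⟩, ?_⟩
  · rcases lt_or_gt_of_ne hmn with hmn | hnm
    · exact (hlt m n hmn).2
    · exact inner_eq_zero_symm.1 (hlt n m hnm).2
  · refine squeeze_zero (fun _ => norm_nonneg _) (fun n => (hf n).2)
      (tendsto_one_div_add_atTop_nhds_zero_nat.comp hmono.tendsto_atTop)

end WeylCriterion

section Lp

variable {α E F : Type*} [MeasurableSpace α] {μ : Measure α}
  [NormedAddCommGroup E] [NormedAddCommGroup F]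

/-- The subspace of `Lᵖ` functions vanishing almost everywhere outside `s`, for an arbitrary,
possibly nonmeasurable, set `s`. -/
def lpSupportedOn (𝕜 E : Type*) [NormedAddCommGroup E] [NormedRing 𝕜] [Module 𝕜 E]
    [IsBoundedSMul 𝕜 E] (p : ENNReal) (μ : Measure α) (s : Set α) : Submodule 𝕜 (Lp E p μ) where
  carrier := {f | ∀ᵐ x ∂μ, x ∉ s → f x = 0}
  zero_mem' := by
    filter_upwards [Lp.coeFn_zero E p μ] with x hx _ using hx
  add_mem' {f g} hf hg := by
    filter_upwards [hf, hg, Lp.coeFn_add f g] with x hfx hgx hx hxs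
    rw [hx, Pi.add_apply, hfx hxs, hgx hxs, add_zero]
  smul_mem' c f hf := by
    filter_upwards [hf, Lp.coeFn_smul c f] with x hfx hx hxs
    rw [hx, Pi.smul_apply, hfx hxs, smul_zero]

lemma norm_le_mul_norm_add_mul_lpNorm {p : ENNReal} (hp : 1 ≤ p) {f g : Lp E p μ} {v : α → F}
    (hv : MemLp v p μ) {a b : ℝ} (ha : 0 ≤ a) (hb : 0 ≤ b)
    (hg : ∀ᵐ x ∂μ, ‖g x‖ ≤ a * ‖f x‖ + b * ‖v x‖) :
    ‖g‖ ≤ a * ‖f‖ + b * lpNorm v p μ := by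
  have haf : MemLp (a • fun x => ‖f x‖) p μ := (Lp.memLp f).norm.const_smul a
  have hbv : MemLp (b • fun x => ‖v x‖) p μ := hv.norm.const_smul b
  calc ‖g‖ = (eLpNorm g p μ).toReal := Lp.norm_def g
    _ ≤ (eLpNorm ((a • fun x => ‖f x‖) + b • fun x => ‖v x‖) p μ).toReal :=
        ENNReal.toReal_mono (haf.add hbv).eLpNorm_ne_top (eLpNorm_mono_ae_real hg)
    _ = lpNorm ((a • fun x => ‖f x‖) + b • fun x => ‖v x‖) p μ :=
        toReal_eLpNorm (haf.add hbv).1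
    _ ≤ lpNorm (a • fun x => ‖f x‖) p μ + lpNorm (b • fun x => ‖v x‖) p μ :=
        lpNorm_add_le haf hp
    _ = a * lpNorm f p μ + b * lpNorm v p μ := by
        rw [lpNorm_const_smul, lpNorm_const_smul, lpNorm_norm (Lp.aestronglyMeasurable f),
          lpNorm_norm hv.1, coe_nnnorm, coe_nnnorm, Real.norm_of_nonneg ha,
          Real.norm_of_nonneg hb]
    _ = a * ‖f‖ + b * lpNorm v p μ := by
        rw [Lp.norm_def, toReal_eLpNorm (Lp.aestronglyMeasurable f)]

lemma integral_norm_mul_norm_le_lpNorm_restrict_mul_norm {p q : ENNReal} [p.HolderConjugate q]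
    {s : Set α} {v : α → F} (hv : MemLp v p μ) {f : Lp E q μ} (hf : ∀ᵐ x ∂μ, x ∉ s → f x = 0) :
    ∫ x, ‖v x‖ * ‖f x‖ ∂μ ≤ lpNorm v p (μ.restrict s) * ‖f‖ := by
  have hvs : MemLp v p (μ.restrict s) := hv.restrict s
  have hfs : MemLp f q (μ.restrict s) := (Lp.memLp f).restrict s
  calc ∫ x, ‖v x‖ * ‖f x‖ ∂μ = ∫ x in s, ‖v x‖ * ‖f x‖ ∂μ := by
        refine (setIntegral_eq_integral_of_ae_compl_eq_zero ?_).symm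
        filter_upwards [hf] with x hx hxs
        rw [hx hxs, norm_zero, mul_zero]
    _ = (eLpNorm ((fun x => ‖v x‖) • fun x => ‖f x‖) 1 (μ.restrict s)).toReal := by
        rw [toReal_eLpNorm (hvs.1.norm.smul hfs.1.norm),
          lpNorm_one_eq_integral_norm (hvs.1.norm.smul hfs.1.norm)]
        simp
    _ ≤ (eLpNorm v p (μ.restrict s) * eLpNorm f q μ).toReal := by
        refine ENNReal.toReal_mono (ENNReal.mul_ne_top hvs.2.ne (Lp.eLpNorm_ne_top f)) ?_
        refine (eLpNorm_smul_le_mul_eLpNorm hfs.1.norm hvs.1.norm (p := p) (q := q)).trans ?_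
        rw [eLpNorm_norm, eLpNorm_norm]
        gcongr
        exact Measure.restrict_le_self
    _ = lpNorm v p (μ.restrict s) * ‖f‖ := by
        rw [ENNReal.toReal_mul, toReal_eLpNorm hvs.1, Lp.norm_def]

lemma memLp_two_mul_prod_s14 {β 𝕜 : Type*} [MeasurableSpace β] {ν : Measure β} [SFinite μ] [SFinite ν]
    [NormedRing 𝕜] [NormMulClass 𝕜] {f : α → 𝕜} {g : β → 𝕜} (hf : MemLp f 2 μ) (hg : MemLp g 2 ν) :
    MemLp (fun x : α × β => f x.1 * g x.2) 2 (μ.prod ν) := by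
  refine (memLp_two_iff_integrable_sq_norm (hf.1.comp_fst.mul hg.1.comp_snd)).2 ?_
  simp only [Pi.mul_apply, norm_mul, mul_pow]
  exact ((memLp_two_iff_integrable_sq_norm hf.1).1 hf).mul_prod
    ((memLp_two_iff_integrable_sq_norm hg.1).1 hg)

section Topological

variable [TopologicalSpace α]

lemma tendsto_measure_smallSets_nhds [μ.OuterRegular] [NullSingletonClass μ] (x : α) :
    Tendsto μ (𝓝 x).smallSets (𝓝 0) := by
  rw [ENNReal.tendsto_nhds_zero]
  intro ε hε
  obtain ⟨U, hxU, hU, hμU⟩ := ({x} : Set α).exists_isOpen_lt_of_lt ε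
    (by rwa [measure_singleton] : μ {x} < ε)
  exact eventually_smallSets.2
    ⟨U, hU.mem_nhds (hxU rfl), fun s hs => (measure_mono hs).trans hμU.le⟩

lemma tendsto_lpNorm_restrict_smallSets_nhds [μ.OuterRegular] [NullSingletonClass μ] {p : ENNReal}
    (hp : p ≠ ⊤) {v : α → E} (hv : MemLp v p μ) (x : α) :
    Tendsto (fun s => lpNorm v p (μ.restrict s)) (𝓝 x).smallSets (𝓝 0) := by
  rcases eq_or_ne p 0 with rfl | hp₀
  · simp
  have hv_lintegral : ∫⁻ y, ‖v y‖ₑ ^ p.toReal ∂μ ≠ ⊤ :=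
    (lintegral_rpow_enorm_lt_top_of_eLpNorm_lt_top hp₀ hp hv.2).ne
  have hlim := ((tendsto_setLIntegral_zero hv_lintegral
    (tendsto_measure_smallSets_nhds x)).ennrpow_const (1 / p.toReal))
  rw [ENNReal.zero_rpow_of_pos (one_div_pos.2 (ENNReal.toReal_pos hp₀ hp))] at hlim
  refine ((ENNReal.tendsto_toReal ENNReal.zero_ne_top).comp hlim).congr fun s => ?_
  rw [Function.comp_apply, ← toReal_eLpNorm (hv.1.restrict),
    eLpNorm_eq_lintegral_rpow_enorm_toReal hp₀ hp]

lemma tendsto_lpNorm_restrict_add_const_mul_smallSets_nhds [μ.OuterRegular]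
    [NullSingletonClass μ] {p : ENNReal} (hp : p ≠ ⊤) {v : α → E} {w : α → F} (hv : MemLp v p μ)
    (hw : MemLp w p μ) (c : ℝ) (x : α) :
    Tendsto (fun s => lpNorm v p (μ.restrict s) + c * lpNorm w p (μ.restrict s))
      (𝓝 x).smallSets (𝓝 0) := by
  simpa only [mul_zero, add_zero] using (tendsto_lpNorm_restrict_smallSets_nhds hp hv x).add
    ((tendsto_lpNorm_restrict_smallSets_nhds hp hw x).const_mul c)

end Topological

lemma linearIndependent_indicatorConstLp_one (𝕜 : Type*) [RCLike 𝕜] {ι : Type*} {A : ι → Set α}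
    (hA : ∀ i, MeasurableSet (A i)) (hμA : ∀ i, μ (A i) ≠ ⊤) (hA₀ : ∀ i, μ (A i) ≠ 0)
    (hdisj : Pairwise (Function.onFun Disjoint A)) :
    LinearIndependent 𝕜 fun i => indicatorConstLp 2 (hA i) (hμA i) (1 : 𝕜) := by
  refine linearIndependent_of_ne_zero_of_inner_eq_zero (𝕜 := 𝕜) (fun i => ?_) fun i j hij => ?_
  · rw [← norm_ne_zero_iff, norm_indicatorConstLp two_ne_zero ENNReal.ofNat_ne_top, norm_one,
      one_mul]
    exact (Real.rpow_pos_of_pos (ENNReal.toReal_pos (hA₀ i) (hμA i)) _).ne'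
  · have hinner := L2.inner_indicatorConstLp_one_indicatorConstLp_one (𝕜 := 𝕜)
      (hA i) (hA j) (hμA i) (hμA j)
    rwa [(hdisj hij).inter_eq, measureReal_empty, RCLike.ofReal_zero] at hinner

lemma not_finiteDimensional_lpSupportedOn (𝕜 : Type*) [RCLike 𝕜] [TopologicalSpace α] [T2Space α]
    [OpensMeasurableSpace α] [μ.IsOpenPosMeasure] {U : Set α} (hU : IsOpen U)
    (hU_inf : U.Infinite) (hμU : μ U ≠ ⊤) :
    ¬ FiniteDimensional 𝕜 (lpSupportedOn 𝕜 𝕜 2 μ U) := by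
  intro hfin
  have : Infinite U := hU_inf.to_subtype
  obtain ⟨B, hB_inf, hB, hB_disj⟩ := exists_seq_infinite_isOpen_pairwise_disjoint U
  let A : ℕ → Set α := fun n => Subtype.val '' B n
  have hA : ∀ n, IsOpen (A n) := fun n => hU.isOpenMap_subtype_val _ (hB n)
  have hAU : ∀ n, A n ⊆ U := fun n => Subtype.coe_image_subset U (B n)
  have hμA : ∀ n, μ (A n) ≠ ⊤ := fun n => measure_ne_top_of_subset (hAU n) hμU
  have hA₀ : ∀ n, μ (A n) ≠ 0 := fun n =>
    ((hA n).measure_pos μ ((hB_inf n).nonempty.image _)).ne'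
  have hA_disj : Pairwise (Function.onFun Disjoint A) := fun m n hmn =>
    (Set.disjoint_image_iff Subtype.val_injective).2 (hB_disj hmn)
  let F : ℕ → lpSupportedOn 𝕜 𝕜 2 μ U := fun n =>
    ⟨indicatorConstLp 2 (hA n).measurableSet (hμA n) 1, by
      filter_upwards [indicatorConstLp_coeFn_notMem (hs := (hA n).measurableSet)
        (hμs := hμA n) (c := (1 : 𝕜)) (p := 2)] with x hx hxU using hx fun hxA => hxU (hAU n hxA)⟩
  have hF : LinearIndependent 𝕜 F := .of_comp (lpSupportedOn 𝕜 𝕜 2 μ U).subtype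
    (linearIndependent_indicatorConstLp_one 𝕜 (fun n => (hA n).measurableSet) hμA hA₀ hA_disj)
  exact not_finite_iff_infinite.2 inferInstance hF.finite_of_isNoetherian

end Lp

lemma exists_pos_eventually_forall_le_norm {X Y E : Type*} [TopologicalSpace X]
    [TopologicalSpace Y] [NormedAddCommGroup E] {g : X × Y → E} (hg : Continuous g) {s : Set Y}
    (hs : IsCompact s) {x : X} (hgx : ∀ y ∈ s, g (x, y) ≠ 0) :
    ∃ δ > 0, ∀ᶠ x' in 𝓝 x, ∀ y ∈ s, δ ≤ ‖g (x', y)‖ := by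
  obtain ⟨δ, hδ, hδg⟩ := hs.exists_forall_le' (f := fun y => ‖g (x, y)‖) (a := 0)
    (by fun_prop) fun y hy => norm_pos_iff.2 (hgx y hy)
  obtain ⟨η, hη, hηδ⟩ := exists_between hδ
  exact ⟨η, hη, hs.eventually_forall_of_forall_eventually fun y hy =>
    hg.norm.continuousAt.eventually (Ici_mem_nhds (hηδ.trans_le (hδg y hy)))⟩

lemma nullSingletonClass_volume_addCircle {T : ℝ} [hT : Fact (0 < T)] :
    NullSingletonClass (volume : Measure (AddCircle T)) := by
  have := hT.out
  refine ⟨fun x => ?_⟩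
  rw [← Metric.closedBall_zero, AddCircle.volume_closedBall, mul_zero, min_eq_right this.le,
    ENNReal.ofReal_zero]

lemma nullSingletonClass_volume_torus (hd : 1 ≤ d) :
    NullSingletonClass (volume : Measure (Td d)) :=
  have := nullSingletonClass_volume_addCircle (T := 2 * Real.pi)
  Measure.pi_nullSingletonClass (⟨0, hd⟩ : Fin d)

/-- The set of pairs with at least one coordinate in `U`. If `f₁` vanishes outside `U`, then
`(v₁(p) f₁(q) + v₁(q) f₁(p)) / 2` vanishes outside this set. -/
def crossSet {α : Type*} (U : Set α) : Set (α × α) := {x | x.1 ∈ U ∨ x.2 ∈ U}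

/-- The function `f₂` solving `(v(p) g(q) + v(q) g(p)) / 2 + (w(p, q) - z) f₂(p, q) = 0`, the third
row of `(H - z) f = 0` with `f₁ = g`. It takes the junk value `0` where `w(p, q) = z`. -/
def thirdRowSolution {α : Type*} (v : α → ℝ) (w : α → α → ℝ) (z : ℂ) (g : α → ℂ) (x : α × α) : ℂ :=
  -(((v x.1 : ℂ) * g x.2 + (v x.2 : ℂ) * g x.1) / 2) / ((w x.1 x.2 : ℂ) - z)

section ThirdRow

variable {α : Type*} {v : α → ℝ} {w : α → α → ℝ} {z : ℂ} {g : α → ℂ} {U : Set α} {δ : ℝ}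

lemma thirdRowSolution_swap (hw : ∀ p q, w p q = w q p) (x : α × α) :
    thirdRowSolution v w z g x.swap = thirdRowSolution v w z g x := by
  simp only [thirdRowSolution, Prod.fst_swap, Prod.snd_swap, hw x.2 x.1]
  ring

lemma thirdRowSolution_add (g h : α → ℂ) :
    thirdRowSolution v w z (g + h) = thirdRowSolution v w z g + thirdRowSolution v w z h := by
  ext x
  simp only [thirdRowSolution, Pi.add_apply]
  ring

lemma thirdRowSolution_smul (c : ℂ) (g : α → ℂ) :
    thirdRowSolution v w z (c • g) = c • thirdRowSolution v w z g := by
  ext x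
  simp only [thirdRowSolution, Pi.smul_apply, smul_eq_mul]
  ring

variable [MeasurableSpace α] {μ : Measure α}

lemma thirdRowSolution_congr_ae {g h : α → ℂ} (hgh : g =ᵐ[μ] h) :
    thirdRowSolution v w z g =ᵐ[μ.prod μ] thirdRowSolution v w z h := by
  filter_upwards [Measure.quasiMeasurePreserving_fst.ae hgh,
    Measure.quasiMeasurePreserving_snd.ae hgh] with x h₁ h₂
  simp only [thirdRowSolution, h₁, h₂]

lemma ae_eq_zero_of_notMem_crossSet (hg : ∀ᵐ p ∂μ, p ∉ U → g p = 0) :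
    ∀ᵐ x ∂μ.prod μ, x ∉ crossSet U → g x.1 = 0 ∧ g x.2 = 0 := by
  filter_upwards [Measure.quasiMeasurePreserving_fst.ae hg,
    Measure.quasiMeasurePreserving_snd.ae hg] with x h₁ h₂ hx
  exact ⟨h₁ fun h => hx (.inl h), h₂ fun h => hx (.inr h)⟩

lemma norm_mul_div_le {a b c : ℂ} (hδ : 0 < δ) (h : b ≠ 0 → δ ≤ ‖c‖) :
    ‖a * b / c‖ ≤ δ⁻¹ * (‖a‖ * ‖b‖) := by
  rcases eq_or_ne b 0 with rfl | hb
  · simp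
  · rw [norm_div, norm_mul, div_eq_inv_mul]
    gcongr
    exact h hb

lemma memLp_thirdRowSolution [SFinite μ] (hv : MemLp v 2 μ)
    (hw : Measurable fun x : α × α => w x.1 x.2) (hδ : 0 < δ)
    (hgap : ∀ x ∈ crossSet U, δ ≤ ‖(w x.1 x.2 : ℂ) - z‖) (hg : MemLp g 2 μ)
    (hgU : ∀ᵐ p ∂μ, p ∉ U → g p = 0) :
    MemLp (thirdRowSolution v w z g) 2 (μ.prod μ) := by
  have hv' : MemLp (fun p => (v p : ℂ)) 2 μ := hv.ofReal
  have hvg : MemLp (fun x : α × α => (v x.1 : ℂ) * g x.2) 2 (μ.prod μ) :=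
    memLp_two_mul_prod_s14 hv' hg
  have hgv : MemLp (fun x : α × α => (v x.2 : ℂ) * g x.1) 2 (μ.prod μ) := by
    simpa only [mul_comm] using memLp_two_mul_prod_s14 hg hv'
  have hwz : Measurable fun x : α × α => (w x.1 x.2 : ℂ) - z :=
    (Complex.measurable_ofReal.comp hw).sub_const z
  refine (hvg.add hgv).of_le_mul (c := δ⁻¹ * ‖(-2⁻¹ : ℂ)‖) ?_ ?_
  · exact ((hvg.1.add hgv.1).mul_const 2⁻¹).neg.mul hwz.inv.aestronglyMeasurable
  filter_upwards [ae_eq_zero_of_notMem_crossSet hgU] with x hx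
  have hgapx : (v x.1 : ℂ) * g x.2 + v x.2 * g x.1 ≠ 0 → δ ≤ ‖(w x.1 x.2 : ℂ) - z‖ :=
    fun hne => hgap x (by_contra fun hxU => hne (by simp [hx hxU]))
  calc ‖thirdRowSolution v w z g x‖
      = ‖-2⁻¹ * ((v x.1 : ℂ) * g x.2 + v x.2 * g x.1) / ((w x.1 x.2 : ℂ) - z)‖ := by
        rw [thirdRowSolution]
        ring_nf
    _ ≤ δ⁻¹ * (‖(-2⁻¹ : ℂ)‖ * ‖(v x.1 : ℂ) * g x.2 + v x.2 * g x.1‖) :=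
        norm_mul_div_le hδ hgapx
    _ = _ := (mul_assoc _ _ _).symm

lemma integrable_mul_div {p : α} (hv : MemLp v 2 μ) (hw : Measurable (w p)) (hδ : 0 < δ)
    (hgap : ∀ t ∈ U, δ ≤ ‖(w p t : ℂ) - z‖) (hg : MemLp g 2 μ)
    (hgU : ∀ᵐ t ∂μ, t ∉ U → g t = 0) :
    Integrable (fun t => (v t : ℂ) * g t / ((w p t : ℂ) - z)) μ := by
  have hv' : MemLp (fun t => (v t : ℂ)) 2 μ := hv.ofReal
  refine ((hv'.norm.integrable_mul hg.norm).const_mul δ⁻¹).mono' ?_ ?_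
  · exact (hv'.1.mul hg.1).mul
      ((Complex.measurable_ofReal.comp hw).sub_const z).inv.aestronglyMeasurable
  filter_upwards [hgU] with t ht
  exact norm_mul_div_le hδ fun hgt => hgap t (not_imp_comm.1 ht hgt)

lemma integrable_sq_div {p : α} (hv : MemLp v 2 μ) (hw : Measurable (w p)) (hδ : 0 < δ)
    (hgap : ∀ t, δ ≤ ‖(w p t : ℂ) - z‖) :
    Integrable (fun t => (v t : ℂ) ^ 2 / ((w p t : ℂ) - z)) μ := by
  have hv' : MemLp (fun t => (v t : ℂ)) 2 μ := hv.ofReal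
  simpa only [sq] using integrable_mul_div (U := univ) hv hw hδ (fun t _ => hgap t) hv'
    (.of_forall fun t ht => absurd (mem_univ t) ht)

lemma norm_integral_mul_div_le {f : Lp ℂ 2 μ} {p : α} (hv : MemLp v 2 μ) (hδ : 0 < δ)
    (hgap : ∀ t ∈ U, δ ≤ ‖(w p t : ℂ) - z‖) (hf : ∀ᵐ t ∂μ, t ∉ U → f t = 0) :
    ‖∫ t, (v t : ℂ) * f t / ((w p t : ℂ) - z) ∂μ‖ ≤
      δ⁻¹ * (lpNorm v 2 (μ.restrict U) * ‖f‖) := by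
  have hint : Integrable (fun t => ‖v t‖ * ‖f t‖) μ := hv.norm.integrable_mul (Lp.memLp f).norm
  calc ‖∫ t, (v t : ℂ) * f t / ((w p t : ℂ) - z) ∂μ‖ ≤ ∫ t, δ⁻¹ * (‖v t‖ * ‖f t‖) ∂μ := by
        refine norm_integral_le_of_norm_le (hint.const_mul _) ?_
        filter_upwards [hf] with t ht
        rw [← Complex.norm_real (v t)]
        exact norm_mul_div_le hδ fun hft => hgap t (not_imp_comm.1 ht hft)
    _ ≤ δ⁻¹ * (lpNorm v 2 (μ.restrict U) * ‖f‖) := by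
        rw [integral_const_mul]
        gcongr
        exact integral_norm_mul_norm_le_lpNorm_restrict_mul_norm hv hf

lemma integral_mul_thirdRowSolution {p : α} (hv : MemLp v 2 μ) (hw : Measurable (w p))
    (hδ : 0 < δ) (hgap : ∀ x ∈ crossSet U, δ ≤ ‖(w x.1 x.2 : ℂ) - z‖) (hg : MemLp g 2 μ)
    (hgU : ∀ᵐ t ∂μ, t ∉ U → g t = 0) (hgp : p ∉ U → g p = 0) :
    ∫ t, (v t : ℂ) * thirdRowSolution v w z g (p, t) ∂μ =
      -(g p / 2) * ∫ t, (v t : ℂ) ^ 2 / ((w p t : ℂ) - z) ∂μ -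
        (v p : ℂ) / 2 * ∫ t, (v t : ℂ) * g t / ((w p t : ℂ) - z) ∂μ := by
  have hsq : Integrable (fun t => -(g p / 2) * ((v t : ℂ) ^ 2 / ((w p t : ℂ) - z))) μ := by
    by_cases hp : p ∈ U
    · exact (integrable_sq_div hv hw hδ fun t => hgap (p, t) (.inl hp)).const_mul _
    · simp [hgp hp]
  have hvg : Integrable (fun t => (v t : ℂ) * g t / ((w p t : ℂ) - z)) μ :=
    integrable_mul_div hv hw hδ (fun t ht => hgap (p, t) (.inr ht)) hg hgU
  rw [← integral_const_mul, ← integral_const_mul, ← integral_sub hsq (hvg.const_mul _)]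
  congr 1 with t
  rw [thirdRowSolution]
  ring

end ThirdRow

section FockSpace

lemma p0_sub_smul (c : ℂ) (f g : H3 d) : p0 (f - c • g) = p0 f - c * p0 g := rfl

lemma p1_sub_smul (c : ℂ) (f g : H3 d) : p1 (f - c • g) = p1 f - c • p1 g := rfl

lemma p2_sub_smul (c : ℂ) (f g : H3 d) : p2 (f - c • g) = p2 f - c • p2 g := rfl

/-- The one-particle component `p1` as a linear map, used to take images of subspaces. -/
def p1ₗ (d : ℕ) : H3 d →ₗ[ℂ] L2 d where
  toFun := p1
  map_add' _ _ := rfl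
  map_smul' _ _ := rfl

lemma norm_withLp_two_le_add {E F : Type*} [SeminormedAddCommGroup E] [SeminormedAddCommGroup F]
    (x : WithLp 2 (E × F)) : ‖x‖ ≤ ‖x.fst‖ + ‖x.snd‖ := by
  refine abs_le_of_sq_le_sq' ?_ (by positivity) |>.2
  rw [WithLp.prod_norm_sq_eq_of_L2]
  nlinarith [norm_nonneg x.fst, norm_nonneg x.snd]

lemma norm_le_norm_p0_add_norm_p1_add_norm_p2 (f : H3 d) :
    ‖f‖ ≤ ‖p0 f‖ + ‖p1 f‖ + ‖p2 f‖ := by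
  calc ‖f‖ ≤ ‖f.fst‖ + ‖f.snd‖ := norm_withLp_two_le_add f
    _ ≤ ‖f.fst‖ + (‖f.snd.fst‖ + ‖f.snd.snd‖) := by
        gcongr
        exact norm_withLp_two_le_add f.snd
    _ = ‖p0 f‖ + ‖p1 f‖ + ‖p2 f‖ := (add_assoc _ _ _).symm

lemma norm_p1_le (f : H3 d) : ‖p1 f‖ ≤ ‖f‖ :=
  (WithLp.norm_fst_le _ f.snd).trans (WithLp.norm_snd_le _ f)

lemma toLp_mem_symSub {g : Td d × Td d → ℂ} (hg : MemLp g 2 volume)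
    (hsymm : ∀ x, g x.swap = g x) : hg.toLp g ∈ symSub d := by
  rw [symSub, LinearMap.mem_ker, LinearMap.sub_apply, sub_eq_zero, LinearMap.id_apply]
  refine (Lp.toLp_compMeasurePreserving hg Measure.measurePreserving_swap).trans ?_
  congr 1 with x
  exact hsymm x

end FockSpace

section TrialSubspace

/-- The trial vectors `(0, f₁, f₂)` at energy `z`: `f₁` vanishes outside `U`, and `f₂` is chosen so
that the third row of `(H - z) f` vanishes; here `v = v₁` and `w = w₂(K; ·, ·)`. -/
def trialSubspace (v : Td d → ℝ) (w : Td d → Td d → ℝ) (z : ℂ) (U : Set (Td d)) :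
    Submodule ℂ (H3 d) where
  carrier := {f | p0 f = 0 ∧ p1 f ∈ lpSupportedOn ℂ ℂ 2 volume U ∧
    p2 f =ᵐ[volume] thirdRowSolution v w z (p1 f)}
  zero_mem' := by
    refine ⟨rfl, zero_mem _, (Lp.coeFn_zero ℂ 2 volume).trans ?_⟩
    refine EventuallyEq.trans ?_ (thirdRowSolution_congr_ae (Lp.coeFn_zero ℂ 2 volume).symm)
    exact .of_forall fun x => by simp [thirdRowSolution]
  add_mem' {f g} hf hg := by
    refine ⟨?_, add_mem hf.2.1 hg.2.1, (Lp.coeFn_add (p2 f) (p2 g)).trans ?_⟩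
    · exact (congrArg₂ (· + ·) hf.1 hg.1).trans (add_zero 0)
    · refine ((hf.2.2.add hg.2.2).trans (thirdRowSolution_add _ _).symm.eventuallyEq).trans ?_
      exact thirdRowSolution_congr_ae (Lp.coeFn_add (p1 f) (p1 g)).symm
  smul_mem' c f hf := by
    refine ⟨?_, Submodule.smul_mem _ c hf.2.1, (Lp.coeFn_smul c (p2 f)).trans ?_⟩
    · exact (congrArg (c * ·) hf.1).trans (mul_zero c)
    · refine ((hf.2.2.const_smul c).trans (thirdRowSolution_smul c _).symm.eventuallyEq).trans ?_
      exact thirdRowSolution_congr_ae (Lp.coeFn_smul c (p1 f)).symm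

variable {v : Td d → ℝ} {w : Td d → Td d → ℝ} {z : ℂ} {U : Set (Td d)} {δ : ℝ}

lemma lpSupportedOn_le_map_trialSubspace (hv : MemLp v 2 volume)
    (hw : Measurable fun x : Td d × Td d => w x.1 x.2) (hsym : ∀ p q, w p q = w q p) (hδ : 0 < δ)
    (hgap : ∀ x ∈ crossSet U, δ ≤ ‖(w x.1 x.2 : ℂ) - z‖) :
    lpSupportedOn ℂ ℂ 2 volume U ≤ (trialSubspace v w z U).map (p1ₗ d) := by
  intro g hg
  have hf₂ : MemLp (thirdRowSolution v w z g) 2 (volume : Measure (Td d × Td d)) :=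
    memLp_thirdRowSolution hv hw hδ hgap (Lp.memLp g) hg
  exact ⟨WithLp.toLp 2 (0, WithLp.toLp 2
    (g, ⟨hf₂.toLp _, toLp_mem_symSub hf₂ (thirdRowSolution_swap hsym)⟩)),
    ⟨rfl, hg, hf₂.coeFn_toLp⟩, rfl⟩

lemma not_finiteDimensional_trialSubspace (hd : 1 ≤ d) (hv : MemLp v 2 volume)
    (hw : Measurable fun x : Td d × Td d => w x.1 x.2) (hsym : ∀ p q, w p q = w q p) (hδ : 0 < δ)
    (hgap : ∀ x ∈ crossSet U, δ ≤ ‖(w x.1 x.2 : ℂ) - z‖) (hU : IsOpen U) (hU_ne : U.Nonempty) :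
    ¬ FiniteDimensional ℂ (trialSubspace v w z U) := by
  have := nullSingletonClass_volume_torus hd
  have hU_inf : U.Infinite := fun hfin =>
    (hU.measure_pos volume hU_ne).ne' (hfin.measure_zero volume)
  intro hfin
  exact not_finiteDimensional_lpSupportedOn ℂ hU hU_inf (measure_ne_top volume U)
    (Submodule.finiteDimensional_of_le (lpSupportedOn_le_map_trialSubspace hv hw hsym hδ hgap))

end TrialSubspace

section Hamiltonian

variable {w₀ v₀ v₁ : Td d → ℝ} {w₁ : Td d → Td d → ℝ} {w₂ : Td d → Td d → Td d → ℝ} {K : Td d}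
  {H : H3 d →L[ℂ] H3 d} {z : ℂ} {U : Set (Td d)} {f : H3 d} {δ ε : ℝ}

lemma norm_p0_sub_smul_le (hH : IsHamiltonian w₀ v₀ v₁ w₁ w₂ K H) (hv₀ : MemLp v₀ 2 volume)
    (hf : f ∈ trialSubspace v₁ (w₂ K) z U) :
    ‖p0 (H f - z • f)‖ ≤ lpNorm v₀ 2 (volume.restrict U) * ‖p1 f‖ := by
  rw [p0_sub_smul, (hH f).1, hf.1, mul_zero, mul_zero, zero_add, sub_zero]
  calc ‖∫ t, (v₀ t : ℂ) * p1 f t‖ ≤ ∫ t, ‖(v₀ t : ℂ) * p1 f t‖ := norm_integral_le_integral_norm _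
    _ = ∫ t, ‖v₀ t‖ * ‖p1 f t‖ := by simp only [norm_mul, Complex.norm_real]
    _ ≤ _ := integral_norm_mul_norm_le_lpNorm_restrict_mul_norm hv₀ hf.2.1

lemma p2_sub_smul_eq_zero (hH : IsHamiltonian w₀ v₀ v₁ w₁ w₂ K H)
    (hne : ∀ x ∈ crossSet U, (w₂ K x.1 x.2 : ℂ) - z ≠ 0)
    (hf : f ∈ trialSubspace v₁ (w₂ K) z U) : p2 (H f - z • f) = 0 := by
  rw [p2_sub_smul]
  refine sub_eq_zero.2 (Lp.ext ?_)
  filter_upwards [(hH f).2.2, Lp.coeFn_smul z (p2 f), hf.2.2,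
    ae_eq_zero_of_notMem_crossSet hf.2.1] with x hHx hzx hfx hxU
  rw [hHx, hzx, Pi.smul_apply, smul_eq_mul, hfx, thirdRowSolution]
  by_cases hx : x ∈ crossSet U
  · have := hne x hx
    field_simp
    ring
  · simp [hxU hx]

lemma p1_sub_smul_ae_eq (hH : IsHamiltonian w₀ v₀ v₁ w₁ w₂ K H) (hv₁ : MemLp v₁ 2 volume)
    (hw₂ : Measurable fun x : Td d × Td d => w₂ K x.1 x.2) (hδ : 0 < δ)
    (hgap : ∀ x ∈ crossSet U, δ ≤ ‖(w₂ K x.1 x.2 : ℂ) - z‖)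
    (hf : f ∈ trialSubspace v₁ (w₂ K) z U) :
    p1 (H f - z • f) =ᵐ[volume] fun p => Delta v₁ w₁ w₂ K p z * p1 f p -
      (v₁ p : ℂ) / 2 * ∫ t, (v₁ t : ℂ) * p1 f t / ((w₂ K p t : ℂ) - z) := by
  rw [p1_sub_smul]
  filter_upwards [(hH f).2.1, Lp.coeFn_sub (p1 (H f)) (z • p1 f), Lp.coeFn_smul z (p1 f), hf.2.1,
    Measure.ae_ae_of_ae_prod hf.2.2] with p hHp hsub hzp hfp hf₂
  have hrow : ∫ t, (v₁ t : ℂ) * p2 f (p, t) =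
      ∫ t, (v₁ t : ℂ) * thirdRowSolution v₁ (w₂ K) z (p1 f) (p, t) :=
    integral_congr_ae (hf₂.mono fun t ht => congrArg _ ht)
  rw [hsub, Pi.sub_apply, hHp, hzp, Pi.smul_apply, smul_eq_mul, hf.1, hrow,
    integral_mul_thirdRowSolution hv₁ (hw₂.comp measurable_prodMk_left) hδ hgap
      (Lp.memLp _) hf.2.1 hfp, Delta]
  ring

lemma norm_p1_sub_smul_le (hH : IsHamiltonian w₀ v₀ v₁ w₁ w₂ K H) (hv₁ : MemLp v₁ 2 volume)
    (hw₂ : Measurable fun x : Td d × Td d => w₂ K x.1 x.2) (hδ : 0 < δ)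
    (hgap : ∀ x ∈ crossSet U, δ ≤ ‖(w₂ K x.1 x.2 : ℂ) - z‖) (hε : 0 ≤ ε)
    (hΔ : ∀ p ∈ U, ‖Delta v₁ w₁ w₂ K p z‖ ≤ ε) (hf : f ∈ trialSubspace v₁ (w₂ K) z U) :
    ‖p1 (H f - z • f)‖ ≤
      ε * ‖p1 f‖ + δ⁻¹ * (lpNorm v₁ 2 (volume.restrict U) * ‖p1 f‖) / 2 * lpNorm v₁ 2 volume := by
  have ha₁ : 0 ≤ lpNorm v₁ 2 (volume.restrict U) := lpNorm_nonneg
  refine norm_le_mul_norm_add_mul_lpNorm one_le_two hv₁ hε (by positivity) ?_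
  filter_upwards [p1_sub_smul_ae_eq hH hv₁ hw₂ hδ hgap hf, hf.2.1] with p hp hfp
  have hdiag : ‖Delta v₁ w₁ w₂ K p z * p1 f p‖ ≤ ε * ‖p1 f p‖ := by
    by_cases hpU : p ∈ U
    · rw [norm_mul]
      gcongr
      exact hΔ p hpU
    · simp [hfp hpU]
  have hoff : ‖∫ t, (v₁ t : ℂ) * p1 f t / ((w₂ K p t : ℂ) - z)‖ ≤
      δ⁻¹ * (lpNorm v₁ 2 (volume.restrict U) * ‖p1 f‖) :=
    norm_integral_mul_div_le hv₁ hδ (fun t ht => hgap (p, t) (.inr ht)) hf.2.1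
  rw [hp]
  calc _ ≤ ‖Delta v₁ w₁ w₂ K p z * p1 f p‖ +
        ‖(v₁ p : ℂ) / 2 * ∫ t, (v₁ t : ℂ) * p1 f t / ((w₂ K p t : ℂ) - z)‖ := norm_sub_le _ _
    _ ≤ ε * ‖p1 f p‖ + ‖v₁ p‖ / 2 * (δ⁻¹ * (lpNorm v₁ 2 (volume.restrict U) * ‖p1 f‖)) := by
        rw [norm_mul (_ / _), norm_div, Complex.norm_real, Complex.norm_ofNat]
        gcongr
    _ = _ := by ring

lemma norm_sub_smul_le_of_mem_trialSubspace (hH : IsHamiltonian w₀ v₀ v₁ w₁ w₂ K H)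
    (hv₀ : MemLp v₀ 2 volume) (hv₁ : MemLp v₁ 2 volume)
    (hw₂ : Measurable fun x : Td d × Td d => w₂ K x.1 x.2) (hδ : 0 < δ)
    (hgap : ∀ x ∈ crossSet U, δ ≤ ‖(w₂ K x.1 x.2 : ℂ) - z‖) (hε : 0 ≤ ε)
    (hΔ : ∀ p ∈ U, ‖Delta v₁ w₁ w₂ K p z‖ ≤ ε) (hf : f ∈ trialSubspace v₁ (w₂ K) z U) :
    ‖H f - z • f‖ ≤ (lpNorm v₀ 2 (volume.restrict U) + ε +
      δ⁻¹ / 2 * lpNorm v₁ 2 volume * lpNorm v₁ 2 (volume.restrict U)) * ‖f‖ := by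
  have ha₀ : 0 ≤ lpNorm v₀ 2 (volume.restrict U) := lpNorm_nonneg
  have ha₁ : 0 ≤ lpNorm v₁ 2 (volume.restrict U) := lpNorm_nonneg
  have hv₁_nonneg : 0 ≤ lpNorm v₁ 2 (volume : Measure (Td d)) := lpNorm_nonneg
  have hne : ∀ x ∈ crossSet U, (w₂ K x.1 x.2 : ℂ) - z ≠ 0 := fun x hx =>
    norm_pos_iff.1 (hδ.trans_le (hgap x hx))
  calc ‖H f - z • f‖
      ≤ ‖p0 (H f - z • f)‖ + ‖p1 (H f - z • f)‖ + ‖p2 (H f - z • f)‖ :=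
        norm_le_norm_p0_add_norm_p1_add_norm_p2 _
    _ ≤ lpNorm v₀ 2 (volume.restrict U) * ‖p1 f‖ + (ε * ‖p1 f‖ +
          δ⁻¹ * (lpNorm v₁ 2 (volume.restrict U) * ‖p1 f‖) / 2 * lpNorm v₁ 2 volume) + 0 := by
        rw [p2_sub_smul_eq_zero hH hne hf, norm_zero]
        gcongr
        · exact norm_p0_sub_smul_le hH hv₀ hf
        · exact norm_p1_sub_smul_le hH hv₁ hw₂ hδ hgap hε hΔ hf
    _ = (lpNorm v₀ 2 (volume.restrict U) + ε +
          δ⁻¹ / 2 * lpNorm v₁ 2 volume * lpNorm v₁ 2 (volume.restrict U)) * ‖p1 f‖ := by ring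
    _ ≤ _ := by
        gcongr
        exact norm_p1_le f

lemma sub_ne_zero_of_notMem_bandKk {k : Td d} (hw₂ : Continuous (w₂ K k))
    (hz : z ∉ bandKk w₂ K k) (q : Td d) : (w₂ K k q : ℂ) - z ≠ 0 := by
  intro hq
  have hrange : IsCompact (range (w₂ K k)) := isCompact_range hw₂
  exact hz ⟨w₂ K k q, ⟨ciInf_le hrange.bddBelow q, le_ciSup hrange.bddAbove q⟩, sub_eq_zero.1 hq⟩

lemma exists_pos_eventually_forall_le_norm_sub {k : Td d}
    (hw₂ : Continuous fun x : Td d × Td d => w₂ K x.1 x.2) (hz : z ∉ bandKk w₂ K k) :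
    ∃ δ > 0, ∀ᶠ p in 𝓝 k, ∀ q, δ ≤ ‖(w₂ K p q : ℂ) - z‖ := by
  have hw₂z : Continuous fun x : Td d × Td d => (w₂ K x.1 x.2 : ℂ) - z :=
    (Complex.continuous_ofReal.comp hw₂).sub continuous_const
  have hw₂k : Continuous (w₂ K k) := hw₂.comp (by fun_prop : Continuous (k, ·))
  simpa only [mem_univ, true_imp_iff] using exists_pos_eventually_forall_le_norm hw₂z isCompact_univ
    fun q _ => sub_ne_zero_of_notMem_bandKk hw₂k hz q

lemma forall_mem_crossSet_le_norm_sub (hsym : ∀ p q, w₂ K p q = w₂ K q p)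
    (hgap : ∀ p ∈ U, ∀ q, δ ≤ ‖(w₂ K p q : ℂ) - z‖) :
    ∀ x ∈ crossSet U, δ ≤ ‖(w₂ K x.1 x.2 : ℂ) - z‖ := by
  rintro ⟨p, q⟩ (hp | hq)
  · exact hgap p hp q
  · rw [hsym p q]
    exact hgap q hq p

lemma continuousAt_Delta {k : Td d} (hv₁ : MemLp v₁ 2 volume) (hw₁ : Continuous (w₁ K))
    (hw₂ : Continuous fun x : Td d × Td d => w₂ K x.1 x.2) (hδ : 0 < δ)
    (hgap : ∀ᶠ p in 𝓝 k, ∀ q, δ ≤ ‖(w₂ K p q : ℂ) - z‖) :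
    ContinuousAt (fun p => Delta v₁ w₁ w₂ K p z) k := by
  have hv₁' : MemLp (fun t => (v₁ t : ℂ)) 2 volume := hv₁.ofReal
  have hne : ∀ t, (w₂ K k t : ℂ) - z ≠ 0 := fun t =>
    norm_pos_iff.1 (hδ.trans_le (hgap.self_of_nhds t))
  have hw₂k : ∀ p, Continuous (w₂ K p) := fun p => hw₂.comp (by fun_prop : Continuous (p, ·))
  have hw₂t : ∀ t, Continuous fun p => w₂ K p t := fun t =>
    hw₂.comp (by fun_prop : Continuous (·, t))
  refine ((Complex.continuous_ofReal.comp hw₁).continuousAt.sub continuousAt_const).sub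
    (continuousAt_const.mul (continuousAt_of_dominated
      (bound := fun t => δ⁻¹ * (‖(v₁ t : ℂ)‖ * ‖(v₁ t : ℂ)‖)) ?_ ?_
      ((hv₁'.norm.integrable_mul hv₁'.norm).const_mul _) ?_))
  · exact .of_forall fun p => (hv₁'.1.pow 2).mul
      ((Complex.measurable_ofReal.comp (hw₂k p).measurable).sub_const z).inv.aestronglyMeasurable
  · filter_upwards [hgap] with p hp
    refine .of_forall fun t => ?_
    rw [sq]
    exact norm_mul_div_le hδ fun _ => hp t
  · exact .of_forall fun t => continuousAt_const.div
      ((Complex.continuous_ofReal.comp (hw₂t t)).sub continuous_const).continuousAt (hne t)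

theorem LamK_subset_essSpec_general (hd : 1 ≤ d)
    (hv₀ : MemLp v₀ 2 volume) (hv₁ : MemLp v₁ 2 volume) (hw₁ : Continuous (w₁ K))
    (hw₂ : Continuous fun x : Td d × Td d => w₂ K x.1 x.2)
    (hsym : ∀ p q : Td d, w₂ K p q = w₂ K q p)
    (hH : IsHamiltonian w₀ v₀ v₁ w₁ w₂ K H) :
    LamK v₁ w₁ w₂ K ⊆ essSpec H := by
  rintro z ⟨k, hz, hΔk⟩
  obtain ⟨δ, hδ, hgap⟩ := exists_pos_eventually_forall_le_norm_sub hw₂ hz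
  have := nullSingletonClass_volume_torus hd
  refine mem_essSpec_of_forall_exists_submodule fun ε hε => ?_
  have hΔ : ∀ᶠ p in 𝓝 k, ‖Delta v₁ w₁ w₂ K p z‖ < ε / 2 :=
    (continuousAt_Delta hv₁ hw₁ hw₂ hδ hgap).norm.eventually_lt_const (by simpa [hΔk])
  have herror : ∀ᶠ U in (𝓝 k).smallSets, lpNorm v₀ 2 (volume.restrict U) +
      δ⁻¹ / 2 * lpNorm v₁ 2 volume * lpNorm v₁ 2 (volume.restrict U) < ε / 2 :=
    (tendsto_lpNorm_restrict_add_const_mul_smallSets_nhds ENNReal.ofNat_ne_top hv₀ hv₁ _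
      k).eventually_lt_const (half_pos hε)
  obtain ⟨s, hs, hsU⟩ := eventually_smallSets.1 ((hgap.smallSets.and hΔ.smallSets).and herror)
  obtain ⟨U, hUs, hU, hkU⟩ := mem_nhds_iff.1 hs
  obtain ⟨⟨hgapU, hΔU⟩, herrorU⟩ := hsU U hUs
  have hgap_cross := forall_mem_crossSet_le_norm_sub hsym hgapU
  refine ⟨trialSubspace v₁ (w₂ K) z U, not_finiteDimensional_trialSubspace hd hv₁ hw₂.measurable
    hsym hδ hgap_cross hU ⟨k, hkU⟩, fun f hf => ?_⟩
  refine (norm_sub_smul_le_of_mem_trialSubspace hH hv₀ hv₁ hw₂.measurable hδ hgap_cross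
    (half_pos hε).le (fun p hp => (hΔU p hp).le) hf).trans ?_
  gcongr
  linarith

end Hamiltonian

/-- For every `K ∈ T^d`, the two-particle branch `Λ_K ⊆ σ_ess(H(K))`. -/
theorem LamK_subset_essSpec
    (d : ℕ) (hd : 1 ≤ d)
    (w₀ v₀ v₁ : Td d → ℝ) (w₁ : Td d → Td d → ℝ) (w₂ : Td d → Td d → Td d → ℝ)
    (hw₀ : Continuous w₀) (hv₀ : Continuous v₀) (hv₁ : Continuous v₁)
    (hw₁ : Continuous fun x : Td d × Td d => w₁ x.1 x.2)
    (hw₂ : Continuous fun x : Td d × Td d × Td d => w₂ x.1 x.2.1 x.2.2)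
    (hsym : ∀ K p q : Td d, w₂ K p q = w₂ K q p)
    (K : Td d) (H : H3 d →L[ℂ] H3 d)
    (hH : IsHamiltonian w₀ v₀ v₁ w₁ w₂ K H) :
    LamK v₁ w₁ w₂ K ⊆ essSpec H := by
  have hv₀_L2 : MemLp v₀ 2 volume := ContinuousMap.memLp _ ℝ ⟨v₀, hv₀⟩
  have hv₁_L2 : MemLp v₁ 2 volume := ContinuousMap.memLp _ ℝ ⟨v₁, hv₁⟩
  exact LamK_subset_essSpec_general hd hv₀_L2 hv₁_L2 (hw₁.comp (by fun_prop : Continuous (K, ·)))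
    (hw₂.comp (by fun_prop : Continuous (K, ·))) (hsym K) hH
end
end
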